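/- (Characterization of transposability.) Let A : 𝓢ₙ →ₗ[ℂ] 𝓢ₘ be a linear map between Schwartz spaces. Then A is topologically transposable — i.e., for every continuous linear functional a : 𝓢ₘ →L[ℂ] ℂ the composition φ ↦ a(A φ) is a continuous linear functional on 𝓢ₙ — if and only if for every point p ∈ ℝᵐ the composition δ_p ∘ A, i.e., the linear functional φ ↦ (A φ)(p) on 𝓢ₙ, is continuous (is a tempered distribution on ℝⁿ). -/

import Mathlib

/-- The Schwartz space `𝓢(ℝⁿ, ℂ)`. -/
abbrev Sch (n : ℕ) : Type := SchwartzMap (EuclideanSpace ℝ (Fin n)) ℂ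

/-!
The Schwartz space is a Fréchet space, hence barrelled. If every `φ ↦ A φ x` is continuous, then so
is every `φ ↦ ∂^{v} (A φ) x`: it is a pointwise limit of difference quotients, so the
Banach–Steinhaus theorem applies. Each Schwartz seminorm of `A φ` is a supremum of nonnegative
multiples of the values `‖∂^{v} (A φ) x‖`, so it is a lower semicontinuous seminorm in `φ`, and such
a seminorm on a barrelled space is continuous. Hence `A` itself is continuous, and so is every
composition `a ∘ A`. Conversely, `δ_p` is a continuous functional.
-/

open Filter Topology Uniformity LineDeriv
open scoped SchwartzMap BoundedContinuousFunction ContDiff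

section UniformLimit

variable {𝕜 : Type*} [NontriviallyNormedField 𝕜] [IsRCLikeNormedField 𝕜]
  {E F : Type*} [NormedAddCommGroup E] [NormedSpace 𝕜 E] [NormedAddCommGroup F] [NormedSpace 𝕜 F]

theorem hasFTaylorSeriesUpTo_of_tendstoUniformly {ι : Type*} {l : Filter ι} [l.NeBot] {N : ℕ∞ω}
    {f : ι → E → F} {p : ι → E → FormalMultilinearSeries 𝕜 E F}
    {q : E → FormalMultilinearSeries 𝕜 E F} (hf : ∀ i, HasFTaylorSeriesUpTo N (f i) (p i))
    (hp : ∀ k : ℕ, k ≤ N → TendstoUniformly (fun i x ↦ p i x k) (fun x ↦ q x k) l) :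
    HasFTaylorSeriesUpTo N (fun x ↦ (q x 0).curry0) q where
  zero_eq _ := rfl
  fderiv k hk := by
    have hcurry : TendstoUniformly (fun i x ↦ (p i x (k + 1)).curryLeft)
        (fun x ↦ (q x (k + 1)).curryLeft) l :=
      (continuousMultilinearCurryLeftEquiv 𝕜 (fun _ : Fin (k + 1) ↦ E) F).isometry.uniformContinuous
        |>.comp_tendstoUniformly (hp (k + 1) (ENat.add_one_natCast_le_withTop_of_lt hk))
    exact hasFDerivAt_of_tendstoUniformly hcurry (fun i ↦ (hf i).fderiv k hk)
      (fun x ↦ (hp k hk.le).tendsto_at x)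
  cont k hk := (hp k hk).continuous (Frequently.of_forall fun i ↦ (hf i).cont k hk)

end UniformLimit

section SeminormUniformity

theorem comap_uniformSpace_eq_of_norm_eq {V G 𝓗 : Type*} [AddCommGroup V]
    [SeminormedAddCommGroup G] [FunLike 𝓗 V G] [AddMonoidHomClass 𝓗 V G] (p : AddGroupSeminorm V)
    (f : 𝓗) (hf : ∀ v, ‖f v‖ = p v) :
    UniformSpace.comap f inferInstance =
      p.toSeminormedAddCommGroup.toPseudoMetricSpace.toUniformSpace := by
  let := p.toSeminormedAddCommGroup
  exact (AddMonoidHomClass.isometry_of_norm f hf).isUniformInducing.comap_uniformSpace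

end SeminormUniformity

section Completeness

variable {E F : Type*} [NormedAddCommGroup E] [NormedSpace ℝ E]
  [NormedAddCommGroup F] [NormedSpace ℝ F]

/-- The weighted derivative `x ↦ ‖x‖ ^ k • D^l f x` of a Schwartz function, as a bounded continuous
function of `x`. Its supremum norm is the Schwartz seminorm of index `(k, l)`, so that these maps
together embed `𝓢(E, F)` into a product of Banach spaces. It is only real-linear since `D^l f x` is
a real multilinear map. -/
noncomputable def weightedIteratedFDeriv (k l : ℕ) : 𝓢(E, F) →ₗ[ℝ] E →ᵇ (E [×l]→L[ℝ] F) where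
  toFun f := .ofNormedAddCommGroup (fun x ↦ ‖x‖ ^ k • iteratedFDeriv ℝ l f x)
    ((continuous_norm.pow k).smul ((f.smooth ⊤).continuous_iteratedFDeriv (mod_cast le_top)))
    (SchwartzMap.seminorm ℝ k l f) fun x ↦ by
      simpa only [norm_smul, norm_pow, norm_norm] using f.le_seminorm ℝ k l x
  map_add' f g := by
    ext1 x
    simp [iteratedFDeriv_add_apply ((f.smooth l).contDiffAt) ((g.smooth l).contDiffAt)]
  map_smul' c f := by
    ext1 x
    simp [iteratedFDeriv_const_smul_apply ((f.smooth l).contDiffAt), smul_comm c]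

theorem weightedIteratedFDeriv_apply (k l : ℕ) (f : 𝓢(E, F)) (x : E) :
    weightedIteratedFDeriv k l f x = ‖x‖ ^ k • iteratedFDeriv ℝ l f x := rfl

theorem norm_weightedIteratedFDeriv (k l : ℕ) (f : 𝓢(E, F)) :
    ‖weightedIteratedFDeriv k l f‖ = SchwartzMap.seminorm ℝ k l f := by
  apply le_antisymm
  · refine (BoundedContinuousFunction.norm_le (apply_nonneg _ _)).2 fun x ↦ ?_
    simpa [weightedIteratedFDeriv_apply, norm_smul] using f.le_seminorm ℝ k l x
  · refine SchwartzMap.seminorm_le_bound ℝ k l f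
      (norm_nonneg (weightedIteratedFDeriv k l f)) fun x ↦ ?_
    simpa [weightedIteratedFDeriv_apply, norm_smul] using
      (weightedIteratedFDeriv k l f).norm_coe_le_norm x

theorem isUniformInducing_weightedIteratedFDeriv :
    IsUniformInducing fun (f : 𝓢(E, F)) (i : ℕ × ℕ) ↦ weightedIteratedFDeriv i.1 i.2 f := by
  rw [isUniformInducing_iff_uniformSpace, Pi.uniformSpace_eq, UniformSpace.comap_iInf,
    (SeminormFamily.withSeminorms_iff_uniformSpace_eq_iInf _).1 (schwartz_withSeminorms ℝ E F)]
  refine iInf_congr fun i ↦ UniformSpace.comap_comap.symm.trans ?_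
  exact comap_uniformSpace_eq_of_norm_eq (G := E →ᵇ (E [×i.2]→L[ℝ] F))
    (schwartzSeminormFamily ℝ E F i).toAddGroupSeminorm (weightedIteratedFDeriv i.1 i.2)
    (norm_weightedIteratedFDeriv i.1 i.2)

theorem exists_weightedIteratedFDeriv_eq_of_tendsto {ι : Type*} {L : Filter ι} [L.NeBot]
    {u : ι → 𝓢(E, F)} {y : ℕ → ∀ l : ℕ, E →ᵇ (E [×l]→L[ℝ] F)}
    (hu : ∀ k l, Tendsto (fun i ↦ weightedIteratedFDeriv k l (u i)) L (𝓝 (y k l))) :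
    ∃ f : 𝓢(E, F), ∀ k l, weightedIteratedFDeriv k l f = y k l := by
  have huniform (l : ℕ) :
      TendstoUniformly (fun i x ↦ iteratedFDeriv ℝ l (u i) x) (fun x ↦ y 0 l x) L := by
    simpa only [Function.comp_def, funext (weightedIteratedFDeriv_apply _ _ _), pow_zero,
      one_smul] using BoundedContinuousFunction.tendsto_iff_tendstoUniformly.1 (hu 0 l)
  have hweight (k l : ℕ) (x : E) : ‖x‖ ^ k • y 0 l x = y k l x :=
    tendsto_nhds_unique (((huniform l).tendsto_at x).const_smul (‖x‖ ^ k))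
      ((BoundedContinuousFunction.tendsto_iff_tendstoUniformly.1 (hu k l)).tendsto_at x)
  have htaylor : HasFTaylorSeriesUpTo ∞ (fun x ↦ (y 0 0 x).curry0) (fun x l ↦ y 0 l x) :=
    hasFTaylorSeriesUpTo_of_tendstoUniformly (fun i ↦ ((u i).smooth ⊤).ftaylorSeries)
      fun l _ ↦ huniform l
  have hderiv (l : ℕ) (x : E) : y 0 l x = iteratedFDeriv ℝ l (fun x ↦ (y 0 0 x).curry0) x :=
    htaylor.eq_iteratedFDeriv (mod_cast le_top) x
  refine ⟨⟨fun x ↦ (y 0 0 x).curry0, htaylor.contDiff, fun k l ↦ ⟨‖y k l‖, fun x ↦ ?_⟩⟩,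
    fun k l ↦ ?_⟩
  · rw [← hderiv]
    simpa [← hweight k l x, norm_smul] using (y k l).norm_coe_le_norm x
  · ext1 x
    exact (congrArg (‖x‖ ^ k • ·) (hderiv l x).symm).trans (hweight k l x)

theorem isClosed_range_weightedIteratedFDeriv :
    IsClosed (Set.range fun (f : 𝓢(E, F)) (i : ℕ × ℕ) ↦ weightedIteratedFDeriv i.1 i.2 f) := by
  refine isClosed_of_closure_subset fun y hy ↦ ?_
  have := comap_neBot_iff_frequently.2 (mem_closure_iff_frequently.1 hy)
  have hlim := tendsto_pi_nhds.1 <| tendsto_comap (x := 𝓝 y)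
    (f := fun (f : 𝓢(E, F)) (i : ℕ × ℕ) ↦ weightedIteratedFDeriv i.1 i.2 f)
  obtain ⟨f, hf⟩ := exists_weightedIteratedFDeriv_eq_of_tendsto fun k l ↦ hlim (k, l)
  exact ⟨f, funext fun i ↦ hf i.1 i.2⟩

instance instCompleteSpaceSchwartzMap [CompleteSpace F] : CompleteSpace 𝓢(E, F) :=
  (completeSpace_iff_isComplete_range isUniformInducing_weightedIteratedFDeriv).2
    isClosed_range_weightedIteratedFDeriv.isComplete

instance instBarrelledSpaceSchwartzMap {𝕜 : Type*} [NontriviallyNormedField 𝕜] [NormedSpace 𝕜 F]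
    [SMulCommClass ℝ 𝕜 F] [CompleteSpace F] : BarrelledSpace 𝕜 𝓢(E, F) :=
  have : (𝓤 𝓢(E, F)).IsCountablyGenerated := IsUniformAddGroup.uniformity_countably_generated
  inferInstance

end Completeness

section Seminorm

variable {E : Type*} [NormedAddCommGroup E] [NormedSpace ℝ E]
  {F : Type*} [NormedAddCommGroup F] [NormedSpace ℝ F]

theorem seminorm_le_iff_iteratedLineDerivOp {𝕜 : Type*} [NormedField 𝕜] [NormedSpace 𝕜 F]
    [SMulCommClass ℝ 𝕜 F] {k l : ℕ} {f : 𝓢(E, F)} {M : ℝ} :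
    SchwartzMap.seminorm 𝕜 k l f ≤ M ↔
      0 ≤ M ∧ ∀ (x : E) (v : Fin l → E), ‖x‖ ^ k * ‖∂^{v} f x‖ ≤ M * ∏ i, ‖v i‖ := by
  simp only [SchwartzMap.iteratedLineDerivOp_eq_iteratedFDeriv]
  constructor
  · refine fun hM ↦ ⟨(apply_nonneg _ f).trans hM, fun x v ↦ ?_⟩
    calc ‖x‖ ^ k * ‖iteratedFDeriv ℝ l f x v‖
        ≤ ‖x‖ ^ k * (‖iteratedFDeriv ℝ l f x‖ * ∏ i, ‖v i‖) := by
          gcongr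
          exact ContinuousMultilinearMap.le_opNorm _ _
      _ = ‖x‖ ^ k * ‖iteratedFDeriv ℝ l f x‖ * ∏ i, ‖v i‖ := (mul_assoc _ _ _).symm
      _ ≤ M * ∏ i, ‖v i‖ := by
          gcongr
          exact (f.le_seminorm 𝕜 k l x).trans hM
  · rintro ⟨hM, hf⟩
    refine SchwartzMap.seminorm_le_bound 𝕜 k l f hM fun x ↦ ?_
    have hnorm : ‖‖x‖ ^ k • iteratedFDeriv ℝ l f x‖ ≤ M :=
      ContinuousMultilinearMap.opNorm_le_bound hM fun v ↦ by simpa [norm_smul] using hf x v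
    simpa [norm_smul] using hnorm

end Seminorm

section Barrelled

variable {𝕜 : Type*} [RCLike 𝕜]
  {X : Type*} [AddCommGroup X] [Module 𝕜 X] [UniformSpace X] [IsUniformAddGroup X]
  [ContinuousSMul 𝕜 X] [BarrelledSpace 𝕜 X]
  {E : Type*} [NormedAddCommGroup E] [NormedSpace ℝ E]
  {F : Type*} [NormedAddCommGroup F] [NormedSpace ℝ F] [NormedSpace 𝕜 F] [SMulCommClass ℝ 𝕜 F]

theorem continuous_lineDerivOp_apply {A : X →ₗ[𝕜] 𝓢(E, F)}
    (hA : ∀ x, Continuous fun φ ↦ A φ x) (v x : E) : Continuous fun φ ↦ ∂_{v} (A φ) x := by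
  let evalA (y : E) : X →L[𝕜] F :=
    { toFun := fun φ ↦ A φ y
      map_add' := by simp
      map_smul' := by simp
      cont := hA y }
  let quotient (t : ℝ) : X →L[𝕜] F := t⁻¹ • (evalA (x + t • v) - evalA x)
  have hquotient : Tendsto (fun t φ ↦ quotient t φ) (𝓝[≠] 0) (𝓝 fun φ ↦ ∂_{v} (A φ) x) :=
    tendsto_pi_nhds.2 fun φ ↦
      ((A φ).hasFDerivAt x).hasLineDerivAt v |>.tendsto_slope_zero
  exact (continuousLinearMapOfTendsto quotient hquotient).continuous

theorem continuous_iteratedLineDerivOp_apply {A : X →ₗ[𝕜] 𝓢(E, F)}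
    (hA : ∀ x, Continuous fun φ ↦ A φ x) {l : ℕ} (v : Fin l → E) (x : E) :
    Continuous fun φ ↦ ∂^{v} (A φ) x := by
  induction l generalizing x with
  | zero => exact hA x
  | succ l ih =>
    exact continuous_lineDerivOp_apply
      (A := (iteratedLineDerivOpCLM 𝕜 𝓢(E, F) (Fin.tail v)).toLinearMap ∘ₗ A) (ih (Fin.tail v))
      (v 0) x

theorem continuous_of_forall_continuous_apply (A : X →ₗ[𝕜] 𝓢(E, F))
    (hA : ∀ x, Continuous fun φ ↦ A φ x) : Continuous A := by
  refine (schwartz_withSeminorms 𝕜 E F).continuous_of_continuous_comp A fun ⟨k, l⟩ ↦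
    Seminorm.continuous_of_lowerSemicontinuous _ ?_
  refine lowerSemicontinuous_iff_isClosed_preimage.2 fun M ↦ ?_
  change IsClosed {φ | SchwartzMap.seminorm 𝕜 k l (A φ) ≤ M}
  simp only [seminorm_le_iff_iteratedLineDerivOp, Set.ofPred_and, Set.ofPred_forall]
  refine isClosed_const.inter (isClosed_iInter fun x ↦ isClosed_iInter fun v ↦ ?_)
  exact isClosed_le ((continuous_iteratedLineDerivOp_apply hA v x).norm.const_mul _)
    continuous_const

theorem transposable_iff_dirac_compositions_continuous_general (A : X →ₗ[𝕜] 𝓢(E, F)) :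
    (∀ a : 𝓢(E, F) →L[𝕜] F, Continuous fun φ ↦ a (A φ)) ↔
      ∀ p : E, Continuous fun φ ↦ A φ p := by
  refine ⟨fun hA p ↦ ?_, fun hA a ↦ a.continuous.comp (continuous_of_forall_continuous_apply A hA)⟩
  exact hA ((BoundedContinuousFunction.evalCLM 𝕜 p).comp
    (SchwartzMap.toBoundedContinuousFunctionCLM 𝕜 E F))

end Barrelled

/-- characterization of transposability: a linear map `A : 𝓢ₙ → 𝓢ₘ` is
topologically transposable (for every tempered distribution `a ∈ 𝓢ₘ'` the composition
`a ∘ A` is continuous) if and only if for every `p ∈ ℝᵐ` the composition `δ_p ∘ A`, i.e.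
the linear functional `φ ↦ (A φ) p`, is continuous. -/
theorem transposable_iff_dirac_compositions_continuous {n m : ℕ} (A : Sch n →ₗ[ℂ] Sch m) :
    (∀ a : Sch m →L[ℂ] ℂ, Continuous fun φ : Sch n => a (A φ)) ↔
      (∀ p : EuclideanSpace ℝ (Fin m), Continuous fun φ : Sch n => (A φ) p) := by
  exact transposable_iff_dirac_compositions_continuous_general A
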